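/- Let −∞ < a < b < ∞ and let f : ℝ → ℝ be measurable, of bounded variation on the compact interval [a,b], Lebesgue integrable on (−∞,a], and Lebesgue integrable on [b,∞). Fix x ∈ (a,b), and let f(x−), f(x+) denote the one-sided limits of f at x (which exist since f is of bounded variation on [a,b]). Then (f(x−)+f(x+))/2 = (1/(2π)) · lim_{T→∞} ∫_{-T}^{T} e^{ixs} ( ∫_a^b e^{-ist} f(t) dt ) ds. -/

import Mathlib

/-!
Interchanging the two integrals turns the truncated inversion integral into
`2 ∫ t in a..b, f t * sin (T (t - x)) / (t - x)`. By the Jordan decomposition one may take `f` to be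
monotone and right-continuous, and then integration by parts against its Stieltjes measure `df`
rewrites this integral in terms of `∫ s in Ioc a b, (Si (T (b - x)) - Si (T (s - x))) df s`. The
integrand is bounded uniformly in `T` and, because `Si (± ∞) = ± π / 2`, tends to `π`, `π / 2` or
`0` according as `s` lies to the left of, at, or to the right of `x`. Dominated convergence then
counts the atom of `df` at `x` with half its mass, which is where the mean of the one-sided limits
comes from. The value `Si ∞ = π / 2` is Fubini applied to `1 / v = ∫ t in Ioi 0, exp (-v t)`.
-/

open Filter MeasureTheory Set Topology
open Function (leftLim rightLim)
open scoped Real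

/-- The sine integral `Si u = ∫ v in 0..u, sin v / v`, written with `Real.sinc` so that the
integrand is continuous at `0`. -/
noncomputable def sineIntegral (u : ℝ) : ℝ := ∫ v in (0 : ℝ)..u, Real.sinc v

theorem sineIntegral_zero : sineIntegral 0 = 0 := intervalIntegral.integral_same

theorem sineIntegral_neg (u : ℝ) : sineIntegral (-u) = -sineIntegral u := by
  have h := intervalIntegral.integral_comp_neg (a := 0) (b := u) Real.sinc
  simp only [Real.sinc_neg, neg_zero] at h
  rw [sineIntegral, sineIntegral, h, intervalIntegral.integral_symm]

theorem continuous_sineIntegral : Continuous sineIntegral :=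
  intervalIntegral.continuous_primitive
    (fun _ _ => Real.continuous_sinc.intervalIntegrable _ _) 0

theorem integral_sin_mul_exp_neg_mul (R t : ℝ) :
    ∫ v in (0 : ℝ)..R, Real.sin v * Real.exp (-v * t) =
      (1 + t ^ 2)⁻¹ - Real.exp (-R * t) * ((Real.cos R + t * Real.sin R) / (1 + t ^ 2)) := by
  have ht : (1 + t ^ 2 : ℝ) ≠ 0 := by positivity
  have hd (v : ℝ) : HasDerivAt
      (fun v => -(Real.exp (-v * t) * ((Real.cos v + t * Real.sin v) / (1 + t ^ 2))))
      (Real.sin v * Real.exp (-v * t)) v := by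
    have h1 : HasDerivAt (fun v : ℝ => Real.exp (-v * t)) (Real.exp (-v * t) * (-1 * t)) v :=
      ((hasDerivAt_id v).neg.mul_const t).exp
    have h2 : HasDerivAt (fun v => (Real.cos v + t * Real.sin v) / (1 + t ^ 2))
        ((-Real.sin v + t * Real.cos v) / (1 + t ^ 2)) v :=
      ((Real.hasDerivAt_cos v).add ((Real.hasDerivAt_sin v).const_mul t)).div_const _
    refine (h1.mul h2).neg.congr_deriv ?_
    field_simp
    ring
  rw [intervalIntegral.integral_eq_sub_of_hasDerivAt (fun v _ => hd v)
    (Continuous.intervalIntegrable (by fun_prop) _ _)]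
  simp only [neg_mul, neg_zero, zero_mul, Real.exp_zero, Real.cos_zero, Real.sin_zero, mul_zero,
    add_zero, one_div, one_mul, sub_neg_eq_add]
  ring

theorem integral_sin_mul_exp_neg_mul_Ioi {v : ℝ} (hv : 0 < v) :
    ∫ t in Ioi (0 : ℝ), Real.sin v * Real.exp (-v * t) = Real.sinc v := by
  rw [integral_const_mul, integral_exp_mul_Ioi (by linarith), Real.sinc_of_ne_zero hv.ne']
  simp [div_eq_mul_inv]

theorem sineIntegral_eq_integral_Ioi {R : ℝ} (hR : 0 ≤ R) :
    sineIntegral R = ∫ t in Ioi (0 : ℝ), ((1 + t ^ 2)⁻¹ -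
      Real.exp (-R * t) * ((Real.cos R + t * Real.sin R) / (1 + t ^ 2))) := by
  have hint : Integrable (Function.uncurry fun v t : ℝ => Real.sin v * Real.exp (-v * t))
      ((volume.restrict (uIoc 0 R)).prod (volume.restrict (Ioi 0))) := by
    rw [uIoc_of_le hR, integrable_prod_iff (Continuous.aestronglyMeasurable (by fun_prop))]
    constructor
    · filter_upwards [ae_restrict_mem measurableSet_Ioc] with v hv
      exact (integrableOn_exp_mul_Ioi (neg_lt_zero.2 hv.1) 0).const_mul (Real.sin v)
    · have hsinc : IntegrableOn (fun v => |Real.sinc v|) (Ioc 0 R) :=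
        Real.continuous_sinc.abs.integrableOn_Icc.mono_set Ioc_subset_Icc_self
      refine hsinc.congr_fun (fun v hv => ?_) measurableSet_Ioc
      simp only [Function.uncurry, norm_mul, Real.norm_eq_abs, Real.abs_exp]
      rw [integral_const_mul, integral_exp_mul_Ioi (neg_lt_zero.2 hv.1),
        Real.sinc_of_ne_zero hv.1.ne', abs_div, abs_of_pos hv.1]
      simp [div_eq_mul_inv]
  simp_rw [← integral_sin_mul_exp_neg_mul]
  rw [← intervalIntegral_integral_swap hint, sineIntegral]
  simp only [intervalIntegral.integral_of_le hR]
  exact setIntegral_congr_fun measurableSet_Ioc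
    fun v hv => (integral_sin_mul_exp_neg_mul_Ioi hv.1).symm

theorem abs_sineIntegral_sub_pi_div_two_le {R : ℝ} (hR : 0 < R) :
    |sineIntegral R - π / 2| ≤ 2 / R := by
  have hexp := integrableOn_exp_mul_Ioi (neg_lt_zero.2 hR) 0
  have hbound (t : ℝ) :
      ‖Real.exp (-R * t) * ((Real.cos R + t * Real.sin R) / (1 + t ^ 2))‖ ≤
        2 * Real.exp (-R * t) := by
    rw [norm_mul, Real.norm_eq_abs, Real.abs_exp, mul_comm]
    gcongr
    have hp : (0 : ℝ) < 1 + t ^ 2 := by positivity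
    rw [norm_div, Real.norm_of_nonneg hp.le, div_le_iff₀ hp]
    calc ‖Real.cos R + t * Real.sin R‖ ≤ |Real.cos R| + |t| * |Real.sin R| := by
          simpa [abs_mul] using abs_add_le (Real.cos R) (t * Real.sin R)
      _ ≤ 1 + |t| * 1 := by
          gcongr
          exacts [Real.abs_cos_le_one R, Real.abs_sin_le_one R]
      _ ≤ 2 * (1 + t ^ 2) := by nlinarith [sq_nonneg (|t| - 1), sq_abs t]
  have hint : IntegrableOn (fun t =>
      Real.exp (-R * t) * ((Real.cos R + t * Real.sin R) / (1 + t ^ 2))) (Ioi 0) :=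
    (hexp.const_mul 2).mono' (Measurable.aestronglyMeasurable (by fun_prop)) (.of_forall hbound)
  rw [sineIntegral_eq_integral_Ioi hR.le, integral_sub integrable_inv_one_add_sq.integrableOn hint,
    integral_Ioi_inv_one_add_sq, Real.arctan_zero, sub_zero, sub_sub_cancel_left, abs_neg]
  refine (norm_integral_le_of_norm_le (hexp.const_mul 2) (.of_forall hbound)).trans_eq ?_
  rw [integral_const_mul, integral_exp_mul_Ioi (neg_lt_zero.2 hR)]
  simp [div_eq_mul_inv]

theorem tendsto_sineIntegral_atTop : Tendsto sineIntegral atTop (𝓝 (π / 2)) := by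
  rw [tendsto_iff_norm_sub_tendsto_zero]
  refine squeeze_zero' (.of_forall fun _ => norm_nonneg _) ?_
    (tendsto_const_nhds (x := (2 : ℝ)).div_atTop tendsto_id)
  filter_upwards [eventually_gt_atTop 0] with R hR
  exact abs_sineIntegral_sub_pi_div_two_le hR

theorem tendsto_sineIntegral_atBot : Tendsto sineIntegral atBot (𝓝 (-(π / 2))) := by
  have h := (tendsto_sineIntegral_atTop.comp tendsto_neg_atBot_atTop).neg
  simpa [Function.comp_def, sineIntegral_neg] using h

theorem abs_sineIntegral_le (u : ℝ) : |sineIntegral u| ≤ 4 := by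
  wlog hu : 0 ≤ u generalizing u
  · have := this (-u) (by linarith)
    rwa [sineIntegral_neg, abs_neg] at this
  rcases le_or_gt u 1 with h1 | h1
  · have h := intervalIntegral.norm_integral_le_of_norm_le_const (a := 0) (b := u)
      fun v _ => (Real.norm_eq_abs _).trans_le (Real.abs_sinc_le_one v)
    rw [sub_zero, abs_of_nonneg hu, Real.norm_eq_abs] at h
    exact h.trans (by linarith)
  · have h := abs_sineIntegral_sub_pi_div_two_le (by linarith : 0 < u)
    have h2 : 2 / u ≤ 2 := div_le_self (by norm_num) h1.le
    rw [abs_le] at h ⊢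
    constructor <;> linarith [Real.pi_pos, Real.pi_le_four]

theorem tendsto_sineIntegral_mul (r : ℝ) :
    Tendsto (fun T => sineIntegral (T * r)) atTop (𝓝 (π / 2 * Real.sign r)) := by
  rcases lt_trichotomy r 0 with hr | rfl | hr
  · simpa [Real.sign_of_neg hr, Function.comp_def] using
      tendsto_sineIntegral_atBot.comp (tendsto_id.atTop_mul_const_of_neg hr)
  · simp [sineIntegral_zero]
  · simpa [Real.sign_of_pos hr, Function.comp_def] using
      tendsto_sineIntegral_atTop.comp (tendsto_id.atTop_mul_const hr)

/-- The Dirichlet kernel `sin (T u) / u` of the Fourier integral, with its limiting value `T` at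
`u = 0`. -/
noncomputable def dirichletKernel (T u : ℝ) : ℝ := T * Real.sinc (T * u)

theorem continuous_dirichletKernel (T : ℝ) : Continuous (dirichletKernel T) :=
  continuous_const.mul (Real.continuous_sinc.comp (continuous_const_mul T))

theorem dirichletKernel_neg (T u : ℝ) : dirichletKernel T (-u) = dirichletKernel T u := by
  simp only [dirichletKernel, mul_neg, Real.sinc_neg]

theorem integral_dirichletKernel_sub (T x c d : ℝ) :
    ∫ t in c..d, dirichletKernel T (t - x) =
      sineIntegral (T * (d - x)) - sineIntegral (T * (c - x)) := by
  have hi (u v : ℝ) : IntervalIntegrable Real.sinc volume u v :=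
    Real.continuous_sinc.intervalIntegrable u v
  rw [sineIntegral, sineIntegral, intervalIntegral.integral_interval_sub_left (hi _ _) (hi _ _)]
  simp only [dirichletKernel, mul_sub, intervalIntegral.integral_const_mul]
  exact intervalIntegral.mul_integral_comp_mul_sub (f := Real.sinc) T (T * x)

theorem tendsto_integral_dirichletKernel_sub (x c d : ℝ) :
    Tendsto (fun T => ∫ t in c..d, dirichletKernel T (t - x)) atTop
      (𝓝 (π / 2 * (Real.sign (d - x) - Real.sign (c - x)))) := by
  simp only [integral_dirichletKernel_sub, mul_sub (π / 2)]
  exact (tendsto_sineIntegral_mul _).sub (tendsto_sineIntegral_mul _)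

theorem abs_integral_dirichletKernel_sub_le (T x c d : ℝ) :
    |∫ t in c..d, dirichletKernel T (t - x)| ≤ 8 := by
  rw [integral_dirichletKernel_sub]
  linarith [abs_sub (sineIntegral (T * (d - x))) (sineIntegral (T * (c - x))),
    abs_sineIntegral_le (T * (d - x)), abs_sineIntegral_le (T * (c - x))]

theorem integral_exp_mul_I_eq_dirichletKernel (T u : ℝ) :
    ∫ s in (-T)..T, Complex.exp ((s * u : ℝ) * Complex.I) = 2 * (dirichletKernel T u : ℂ) := by
  rw [dirichletKernel]
  rcases eq_or_ne u 0 with rfl | hu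
  · simp [← two_mul]
  · have h := intervalIntegral.integral_comp_mul_right (a := -T) (b := T)
      (fun v : ℝ => Complex.exp (v * Complex.I)) hu
    rw [h, neg_mul, integral_exp_mul_I_eq_sinc, Complex.real_smul]
    have hu' : (u : ℂ) ≠ 0 := Complex.ofReal_ne_zero.2 hu
    push_cast
    field_simp

theorem integral_exp_smul_integral_exp_smul {E : Type*} [NormedAddCommGroup E] [NormedSpace ℂ E]
    [CompleteSpace E] {f : ℝ → E} {a b : ℝ} (hf : IntervalIntegrable f volume a b) (x T : ℝ) :
    ∫ s in (-T)..T, Complex.exp (Complex.I * x * s) •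
        (∫ t in a..b, Complex.exp (-(Complex.I * s * t)) • f t) =
      (2 : ℂ) • ∫ t in a..b, dirichletKernel T (t - x) • f t := by
  have hexp (s t : ℝ) : Complex.exp (Complex.I * x * s) •
      (Complex.exp (-(Complex.I * s * t)) • f t) =
      Complex.exp ((s * (x - t) : ℝ) * Complex.I) • f t := by
    rw [smul_smul, ← Complex.exp_add]
    congr 2
    push_cast
    ring
  have hint : IntegrableOn (Function.uncurry fun s t : ℝ =>
      Complex.exp ((s * (x - t) : ℝ) * Complex.I) • f t) (uIoc (-T) T ×ˢ uIoc a b) := by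
    rw [IntegrableOn, Measure.volume_eq_prod, ← Measure.prod_restrict]
    have : IsFiniteMeasure (volume.restrict (uIoc (-T) T)) :=
      inferInstanceAs (IsFiniteMeasure (volume.restrict (Ioc _ _)))
    exact ((intervalIntegrable_iff.1 hf).comp_snd (volume.restrict (uIoc (-T) T))).bdd_smul 1
      (Continuous.aestronglyMeasurable (by fun_prop))
      (.of_forall fun z => (Complex.norm_exp_ofReal_mul_I _).le)
  simp only [← intervalIntegral.integral_smul, hexp]
  rw [intervalIntegral_intervalIntegral_swap hint]
  simp only [intervalIntegral.integral_smul_const, integral_exp_mul_I_eq_dirichletKernel, mul_smul,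
    ← neg_sub _ x, dirichletKernel_neg, Complex.coe_smul]

theorem stieltjes_measureReal_Ioc (G : StieltjesFunction ℝ) {a b : ℝ} (hab : a ≤ b) :
    G.measure.real (Ioc a b) = G b - G a := by
  rw [measureReal_def, G.measure_Ioc, ENNReal.toReal_ofReal (sub_nonneg.2 (G.mono hab))]

theorem stieltjes_measureReal_Ioo (G : StieltjesFunction ℝ) {a b : ℝ} (hab : a < b) :
    G.measure.real (Ioo a b) = leftLim G b - G a := by
  rw [measureReal_def, G.measure_Ioo, ENNReal.toReal_ofReal (sub_nonneg.2 (G.mono.le_leftLim hab))]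

section IntegrationByParts

variable {E : Type*} [NormedAddCommGroup E] [NormedSpace ℝ E] (G : StieltjesFunction ℝ)
  {k : ℝ → E} {a b : ℝ}

theorem integral_integral_stieltjes [CompleteSpace E] (hab : a ≤ b)
    (hk : IntervalIntegrable k volume a b) :
    ∫ s in Ioc a b, (∫ t in s..b, k t) ∂G.measure = ∫ t in a..b, (G t - G a) • k t := by
  have : IsFiniteMeasure (G.measure.restrict (Ioc a b)) := ⟨by simp⟩
  have hle : MeasurableSet {p : ℝ × ℝ | p.1 ≤ p.2} := measurableSet_le measurable_fst measurable_snd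
  calc ∫ s in Ioc a b, (∫ t in s..b, k t) ∂G.measure
      = ∫ s in Ioc a b, (∫ t in Ioc a b, (Ici s).indicator k t) ∂G.measure := by
        refine setIntegral_congr_fun measurableSet_Ioc fun s hs => ?_
        have hset : Ioc a b ∩ Ici s = Icc s b := by
          ext t
          simp only [mem_inter_iff, mem_Ioc, mem_Ici, mem_Icc]
          grind
        simp only [setIntegral_indicator measurableSet_Ici, hset, integral_Icc_eq_integral_Ioc,
          intervalIntegral.integral_of_le hs.2]
    _ = ∫ t in Ioc a b, (∫ s in Ioc a b, (Iic t).indicator (fun _ => k t) s ∂G.measure) :=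
        integral_integral_swap
          (((intervalIntegrable_iff_integrableOn_Ioc_of_le hab).1 hk).comp_snd
            (G.measure.restrict (Ioc a b)) |>.indicator hle)
    _ = ∫ t in a..b, (G t - G a) • k t := by
        rw [intervalIntegral.integral_of_le hab]
        refine setIntegral_congr_fun measurableSet_Ioc fun t ht => ?_
        simp only [setIntegral_indicator measurableSet_Iic, Ioc_inter_Iic, min_eq_right ht.2,
          setIntegral_const, stieltjes_measureReal_Ioc G ht.1.le]

theorem intervalIntegrable_stieltjes_smul (hab : a ≤ b) (hk : IntervalIntegrable k volume a b) :
    IntervalIntegrable (fun t => G t • k t) volume a b := by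
  rw [intervalIntegrable_iff_integrableOn_Ioc_of_le hab] at hk ⊢
  refine hk.bdd_smul (max |G a| |G b|) G.mono.measurable.aestronglyMeasurable ?_
  filter_upwards [ae_restrict_mem measurableSet_Ioc] with t ht
  exact abs_le_max_abs_abs (G.mono ht.1.le) (G.mono ht.2)

theorem integral_stieltjes_smul_by_parts [CompleteSpace E] (hab : a ≤ b)
    (hk : IntervalIntegrable k volume a b) :
    ∫ t in a..b, G t • k t =
      G a • (∫ t in a..b, k t) + ∫ s in Ioc a b, (∫ t in s..b, k t) ∂G.measure := by
  have hGak : IntervalIntegrable (fun t => G a • k t) volume a b := hk.smul (G a)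
  simp only [integral_integral_stieltjes G hab hk, sub_smul]
  rw [intervalIntegral.integral_sub (intervalIntegrable_stieltjes_smul G hab hk) hGak,
    intervalIntegral.integral_smul, add_sub_cancel]

end IntegrationByParts

theorem integral_one_sub_sign_stieltjes (G : StieltjesFunction ℝ) {a b x : ℝ} (hx : x ∈ Ioo a b) :
    ∫ s in Ioc a b, (1 - Real.sign (s - x)) ∂G.measure = (leftLim G x - G a) + (G x - G a) := by
  have hsign (s : ℝ) : 1 - Real.sign (s - x) =
      (Iio x).indicator (fun _ => 1) s + (Iic x).indicator (fun _ => 1) s := by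
    rcases lt_trichotomy s x with h | rfl | h
    · norm_num [Real.sign_of_neg (sub_neg.2 h), h, h.le]
    · simp
    · simp [Real.sign_of_pos (sub_pos.2 h), h.not_gt, h.not_ge]
  have hIio : Ioc a b ∩ Iio x = Ioo a x := by
    ext s; simp only [mem_inter_iff, mem_Ioc, mem_Iio, mem_Ioo]; grind
  have hIic : Ioc a b ∩ Iic x = Ioc a x := by rw [Ioc_inter_Iic, min_eq_right hx.2.le]
  have hconst : IntegrableOn (fun _ => (1 : ℝ)) (Ioc a b) G.measure := integrableOn_const (by simp)
  simp only [hsign]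
  rw [integral_add (hconst.indicator measurableSet_Iio) (hconst.indicator measurableSet_Iic),
    setIntegral_indicator measurableSet_Iio, setIntegral_indicator measurableSet_Iic, hIio, hIic,
    setIntegral_const, setIntegral_const, stieltjes_measureReal_Ioo G hx.1,
    stieltjes_measureReal_Ioc G hx.1.le, smul_eq_mul, smul_eq_mul, mul_one, mul_one]

theorem tendsto_integral_stieltjes_mul_dirichletKernel (G : StieltjesFunction ℝ) {a b x : ℝ}
    (hx : x ∈ Ioo a b) :
    Tendsto (fun T => ∫ t in a..b, G t * dirichletKernel T (t - x)) atTop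
      (𝓝 (π * ((leftLim G x + G x) / 2))) := by
  have hab : a ≤ b := (hx.1.trans hx.2).le
  have hdct : Tendsto
      (fun T => ∫ s in Ioc a b, (∫ t in s..b, dirichletKernel T (t - x)) ∂G.measure) atTop
      (𝓝 (∫ s in Ioc a b, π / 2 * (1 - Real.sign (s - x)) ∂G.measure)) := by
    refine tendsto_integral_filter_of_dominated_convergence (fun _ => 8) (.of_forall fun T => ?_)
      (.of_forall fun T => .of_forall fun s => abs_integral_dirichletKernel_sub_le T x s b)
      (integrableOn_const (by simp)) (.of_forall fun s => ?_)
    · simp only [integral_dirichletKernel_sub]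
      have := continuous_sineIntegral
      exact Continuous.aestronglyMeasurable (by fun_prop)
    · simpa only [Real.sign_of_pos (sub_pos.2 hx.2)] using
        tendsto_integral_dirichletKernel_sub x s b
  have hkernel := tendsto_integral_dirichletKernel_sub x a b
  rw [Real.sign_of_pos (sub_pos.2 hx.2), Real.sign_of_neg (sub_neg.2 hx.1)] at hkernel
  rw [integral_const_mul, integral_one_sub_sign_stieltjes G hx] at hdct
  have hparts (T : ℝ) := integral_stieltjes_smul_by_parts G hab
    (((continuous_dirichletKernel T).comp (continuous_sub_right x)).intervalIntegrable a b)
  simp only [smul_eq_mul, Function.comp_apply] at hparts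
  simp only [hparts]
  convert (hkernel.const_mul (G a)).add hdct using 2
  ring

theorem ae_rightLim_eq_of_monotone {g : ℝ → ℝ} (hg : Monotone g) : rightLim g =ᵐ[volume] g := by
  filter_upwards [hg.countable_not_continuousAt.ae_notMem volume] with t ht
  exact (not_not.1 ht).continuousWithinAt.rightLim_eq

theorem tendsto_integral_mul_dirichletKernel_of_monotone {g : ℝ → ℝ} (hg : Monotone g) {a b x : ℝ}
    (hx : x ∈ Ioo a b) :
    Tendsto (fun T => ∫ t in a..b, g t * dirichletKernel T (t - x)) atTop
      (𝓝 (π * ((leftLim g x + rightLim g x) / 2))) := by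
  have h := tendsto_integral_stieltjes_mul_dirichletKernel hg.stieltjesFunction hx
  have hcoe : (hg.stieltjesFunction : ℝ → ℝ) = rightLim g := rfl
  rw [hcoe, leftLim_rightLim (hg.tendsto_leftLim x)] at h
  refine h.congr fun T => intervalIntegral.integral_congr_ae ?_
  filter_upwards [ae_rightLim_eq_of_monotone hg] with t ht _
  rw [ht]

theorem exists_monotone_eqOn_sub_of_boundedVariationOn {f : ℝ → ℝ} {a b : ℝ} (hab : a ≤ b)
    (hf : BoundedVariationOn f (Icc a b)) :
    ∃ p q : ℝ → ℝ, Monotone p ∧ Monotone q ∧ EqOn f (p - q) (Icc a b) := by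
  obtain ⟨p, q, hp, hq, rfl⟩ :=
    hf.locallyBoundedVariationOn.exists_monotoneOn_sub_monotoneOn
  have hext {r : ℝ → ℝ} (hr : MonotoneOn r (Icc a b)) :
      Monotone (IccExtend hab fun t : Icc a b => r t) :=
    Monotone.IccExtend hab fun s t hst => hr s.2 t.2 hst
  refine ⟨_, _, hext hp, hext hq, fun t ht => ?_⟩
  simp only [Pi.sub_apply, IccExtend_of_mem hab _ ht]

theorem intervalIntegrable_of_boundedVariationOn_real {f : ℝ → ℝ} {a b : ℝ} (hab : a ≤ b)
    (hf : BoundedVariationOn f (Icc a b)) : IntervalIntegrable f volume a b := by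
  obtain ⟨p, q, hp, hq, hfpq⟩ := exists_monotone_eqOn_sub_of_boundedVariationOn hab hf
  refine (hp.intervalIntegrable.sub hq.intervalIntegrable).congr fun t ht => ?_
  rw [uIoc_of_le hab] at ht
  exact (hfpq (Ioc_subset_Icc_self ht)).symm

theorem tendsto_integral_mul_dirichletKernel_of_boundedVariationOn {f : ℝ → ℝ} {a b x : ℝ}
    (hf : BoundedVariationOn f (Icc a b)) (hx : x ∈ Ioo a b) {fl fr : ℝ}
    (hfl : Tendsto f (𝓝[<] x) (𝓝 fl)) (hfr : Tendsto f (𝓝[>] x) (𝓝 fr)) :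
    Tendsto (fun T => ∫ t in a..b, f t * dirichletKernel T (t - x)) atTop
      (𝓝 (π * ((fl + fr) / 2))) := by
  have hab : a ≤ b := (hx.1.trans hx.2).le
  obtain ⟨p, q, hp, hq, hfpq⟩ := exists_monotone_eqOn_sub_of_boundedVariationOn hab hf
  have hleft : fl = leftLim p x - leftLim q x := by
    refine tendsto_nhds_unique hfl
      (((hp.tendsto_leftLim x).sub (hq.tendsto_leftLim x)).congr' ?_)
    filter_upwards [Ioo_mem_nhdsLT hx.1] with t ht
    exact (hfpq ⟨ht.1.le, (ht.2.trans hx.2).le⟩).symm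
  have hright : fr = rightLim p x - rightLim q x := by
    refine tendsto_nhds_unique hfr
      (((hp.tendsto_rightLim x).sub (hq.tendsto_rightLim x)).congr' ?_)
    filter_upwards [Ioo_mem_nhdsGT hx.2] with t ht
    exact (hfpq ⟨(hx.1.trans ht.1).le, ht.2.le⟩).symm
  have hsplit (T : ℝ) : ∫ t in a..b, f t * dirichletKernel T (t - x) =
      (∫ t in a..b, p t * dirichletKernel T (t - x)) -
        ∫ t in a..b, q t * dirichletKernel T (t - x) := by
    have hk : ContinuousOn (fun t => dirichletKernel T (t - x)) (uIcc a b) :=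
      ((continuous_dirichletKernel T).comp (continuous_sub_right x)).continuousOn
    rw [← intervalIntegral.integral_sub (hp.intervalIntegrable.mul_continuousOn hk)
      (hq.intervalIntegrable.mul_continuousOn hk)]
    refine intervalIntegral.integral_congr fun t ht => ?_
    rw [uIcc_of_le hab] at ht
    simp only [hfpq ht, Pi.sub_apply, sub_mul]
  simp only [hsplit]
  convert (tendsto_integral_mul_dirichletKernel_of_monotone hp hx).sub
    (tendsto_integral_mul_dirichletKernel_of_monotone hq hx) using 2
  rw [hleft, hright]
  ring

section FiniteDimensional

variable {E : Type*} [NormedAddCommGroup E] [NormedSpace ℝ E] [FiniteDimensional ℝ E]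
  {f : ℝ → E} {a b : ℝ}

theorem tendsto_of_forall_tendsto_clm_apply {ι : Type*} {l : Filter ι} {u : ι → E} {v : E}
    (h : ∀ L : E →L[ℝ] ℝ, Tendsto (fun i => L (u i)) l (𝓝 (L v))) : Tendsto u l (𝓝 v) := by
  let B := Module.finBasis ℝ E
  have hsum : Tendsto (fun i => ∑ j, (B.coord j).toContinuousLinearMap (u i) • B j) l
      (𝓝 (∑ j, (B.coord j).toContinuousLinearMap v • B j)) :=
    tendsto_finsetSum _ fun j _ => (h _).smul_const _
  simpa [B.sum_repr] using hsum

theorem intervalIntegrable_of_boundedVariationOn (hab : a ≤ b)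
    (hf : BoundedVariationOn f (Icc a b)) : IntervalIntegrable f volume a b := by
  let B := Module.finBasis ℝ E
  have hsum : IntervalIntegrable
      (fun t => ∑ j, (B.coord j).toContinuousLinearMap (f t) • B j) volume a b := by
    simp only [intervalIntegrable_iff]
    refine integrable_finsetSum _ fun j _ => Integrable.smul_const ?_ _
    exact intervalIntegrable_iff.1 <| intervalIntegrable_of_boundedVariationOn_real hab
      ((B.coord j).toContinuousLinearMap.lipschitz.comp_boundedVariationOn hf)
  simpa [B.sum_repr] using hsum

theorem tendsto_integral_dirichletKernel_smul (hf : BoundedVariationOn f (Icc a b)) {x : ℝ}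
    (hx : x ∈ Ioo a b) {fl fr : E} (hfl : Tendsto f (𝓝[<] x) (𝓝 fl))
    (hfr : Tendsto f (𝓝[>] x) (𝓝 fr)) :
    Tendsto (fun T => ∫ t in a..b, dirichletKernel T (t - x) • f t) atTop
      (𝓝 (π • midpoint ℝ fl fr)) := by
  have := FiniteDimensional.complete ℝ E
  refine tendsto_of_forall_tendsto_clm_apply fun L => ?_
  have hint (T : ℝ) : IntervalIntegrable (fun t => dirichletKernel T (t - x) • f t) volume a b :=
    (intervalIntegrable_of_boundedVariationOn (hx.1.trans hx.2).le hf).continuousOn_smul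
      ((continuous_dirichletKernel T).comp (continuous_sub_right x)).continuousOn
  convert tendsto_integral_mul_dirichletKernel_of_boundedVariationOn
    (L.lipschitz.comp_boundedVariationOn hf) hx ((L.continuous.tendsto fl).comp hfl)
    ((L.continuous.tendsto fr).comp hfr) using 2
  · rw [← L.intervalIntegral_comp_comm (hint _)]
    simp only [map_smul, smul_eq_mul, Function.comp_apply, mul_comm]
  · simp only [midpoint_eq_smul_add, map_smul, map_add, smul_eq_mul, invOf_eq_inv]
    ring

end FiniteDimensional

theorem fourier_inversion_local_BV_general {E : Type*} [NormedAddCommGroup E] [NormedSpace ℂ E]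
    [FiniteDimensional ℂ E] {f : ℝ → E} {a b x : ℝ} (hf : BoundedVariationOn f (Icc a b))
    (hx : x ∈ Ioo a b) {fl fr : E} (hfl : Tendsto f (𝓝[<] x) (𝓝 fl))
    (hfr : Tendsto f (𝓝[>] x) (𝓝 fr)) :
    Tendsto
      (fun T : ℝ => (1 / (2 * (π : ℂ))) •
        ∫ s in (-T)..T, Complex.exp (Complex.I * x * s) •
          (∫ t in a..b, Complex.exp (-(Complex.I * s * t)) • f t))
      atTop (𝓝 (midpoint ℝ fl fr)) := by
  have : FiniteDimensional ℝ E := FiniteDimensional.complexToReal E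
  have := FiniteDimensional.complete ℝ E
  have hint := intervalIntegrable_of_boundedVariationOn (hx.1.trans hx.2).le hf
  have hscale : 1 / (2 * (π : ℂ)) * 2 = (π⁻¹ : ℝ) := by
    push_cast
    ring
  simp only [integral_exp_smul_integral_exp_smul hint, smul_smul, hscale, Complex.coe_smul]
  simpa only [smul_smul, inv_mul_cancel₀ Real.pi_ne_zero, one_smul] using
    (tendsto_integral_dirichletKernel_smul hf hx hfl hfr).const_smul π⁻¹

/-- Local Fourier inversion: `f` of bounded variation on `[a,b]`, Lebesgue integrable on
`(-∞,a]` and `[b,∞)`.  For `x ∈ (a,b)`,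
`(f(x-)+f(x+))/2 = (1/(2π)) lim_{T→∞} ∫_{-T}^{T} e^{ixs} (∫_a^b e^{-ist} f(t) dt) ds`. -/
theorem fourier_inversion_local_BV (a b : ℝ) (hab : a < b) (f : ℝ → ℝ)
    (hmeas : Measurable f)
    (hbv : BoundedVariationOn f (Set.Icc a b))
    (hint1 : MeasureTheory.IntegrableOn f (Set.Iic a))
    (hint2 : MeasureTheory.IntegrableOn f (Set.Ici b))
    (x : ℝ) (hx : x ∈ Set.Ioo a b) (fl fr : ℝ)
    (hfl : Filter.Tendsto f (nhdsWithin x (Set.Iio x)) (nhds fl))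
    (hfr : Filter.Tendsto f (nhdsWithin x (Set.Ioi x)) (nhds fr)) :
    Filter.Tendsto
      (fun T : ℝ => (1 / (2 * (Real.pi : ℂ))) *
        ∫ s in (-T)..T, Complex.exp (Complex.I * x * s) *
          (∫ t in a..b, Complex.exp (-(Complex.I * s * t)) * ((f t : ℝ) : ℂ)))
      Filter.atTop
      (nhds (((fl + fr) / 2 : ℝ) : ℂ)) := by
  simpa [midpoint_eq_smul_add, div_eq_inv_mul, mul_add] using fourier_inversion_local_BV_general
    (Complex.isometry_ofReal.lipschitz.comp_boundedVariationOn hbv) hx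
    ((Complex.continuous_ofReal.tendsto fl).comp hfl)
    ((Complex.continuous_ofReal.tendsto fr).comp hfr)
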